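/- Let 0 < α < 1 and p = n^{-α}. Then asymptotically almost surely, the random graph G(n,p) contains no two distinct vertices u, v such that N(u) \ {v} ⊆ N(v) \ {u}. That is, the probability that there exist distinct u, v with N(u) \ {v} ⊆ N(v) \ {u} tends to 0 as n → ∞. -/

import Mathlib

open Filter

-- `graphProb n p A` is the probability that the Erdős–Rényi random graph `G(n,p)` (each
-- of the `C(n,2)` possible edges present independently with probability `p`) satisfies
-- the property `A`.
open Classical in
noncomputable def graphProb (n : ℕ) (p : ℝ) (A : SimpleGraph (Fin n) → Prop) : ℝ :=
  ∑ G : SimpleGraph (Fin n),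
    if A G then p ^ (Nat.card G.edgeSet) * (1 - p) ^ (n.choose 2 - Nat.card G.edgeSet) else 0

lemma pairs_sum {ι κ : Type*} [DecidableEq ι] [DecidableEq κ] (p : ℝ) (a b : κ → ι)
    (W : Finset κ) :
    ∀ S : Finset ι, (∀ w ∈ W, a w ∈ S) → (∀ w ∈ W, b w ∈ S) →
      (∀ w ∈ W, ∀ w' ∈ W, a w ≠ b w') → (∀ w ∈ W, ∀ w' ∈ W, a w = a w' → w = w') →
      (∀ w ∈ W, ∀ w' ∈ W, b w = b w' → w = w') →
      ∑ T ∈ S.powerset, (if ∀ w ∈ W, a w ∈ T → b w ∈ T then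
        p ^ T.card * (1 - p) ^ (S.card - T.card) else 0) = (1 - p * (1 - p)) ^ W.card := by
  induction W using Finset.induction_on with
  | empty =>
    intro S _ _ _ _ _
    simp [Finset.sum_pow_mul_eq_add_pow]
  | insert x W hx ih =>
    intro S ha hb hab haa hbb
    have hxx : x ∈ insert x W := Finset.mem_insert_self _ _
    have hW : ∀ w ∈ W, w ∈ insert x W := fun w hw => Finset.mem_insert_of_mem hw
    obtain ⟨S', hS'⟩ : ∃ S', S' = (S.erase (a x)).erase (b x) := ⟨_, rfl⟩
    have hne : a x ≠ b x := hab x hxx x hxx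
    have hbS : b x ∉ S' := by simp [hS']
    have haS : a x ∉ insert (b x) S' := by simp [hS', hne]
    have haS' : a x ∉ S' := by simp [hS']
    have hSS : S = insert (a x) (insert (b x) S') := by
      rw [hS', Finset.insert_erase, Finset.insert_erase (ha x hxx)]
      exact Finset.mem_erase.2 ⟨hne.symm, hb x hxx⟩
    have hwx : ∀ w ∈ W, w ≠ x := fun w hw h => hx (h ▸ hw)
    have n1 : ∀ w ∈ W, a w ≠ a x := fun w hw h => hwx w hw (haa w (hW w hw) x hxx h)
    have n2 : ∀ w ∈ W, b w ≠ b x := fun w hw h => hwx w hw (hbb w (hW w hw) x hxx h)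
    have n3 : ∀ w ∈ W, a w ≠ b x := fun w hw => hab w (hW w hw) x hxx
    have n4 : ∀ w ∈ W, b w ≠ a x := fun w hw h => hab x hxx w (hW w hw) h.symm
    have key := ih S'
      (fun w hw => by simp [hS', n1 w hw, n3 w hw, ha w (hW w hw)])
      (fun w hw => by simp [hS', n2 w hw, n4 w hw, hb w (hW w hw)])
      (fun w hw w' hw' => hab w (hW w hw) w' (hW w' hw'))
      (fun w hw w' hw' => haa w (hW w hw) w' (hW w' hw'))
      (fun w hw w' hw' => hbb w (hW w hw) w' (hW w' hw'))
    rw [Finset.card_insert_of_notMem hx, pow_succ, ← key, hSS,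
      Finset.sum_powerset_insert haS, Finset.sum_powerset_insert hbS,
      Finset.sum_powerset_insert hbS, ← Finset.sum_add_distrib, ← Finset.sum_add_distrib,
      ← Finset.sum_add_distrib, Finset.sum_mul]
    refine Finset.sum_congr rfl fun T hT => ?_
    have hTS : T ⊆ S' := Finset.mem_powerset.1 hT
    have haT : a x ∉ T := fun h => haS' (hTS h)
    have hbT : b x ∉ T := fun h => hbS (hTS h)
    have haT' : a x ∉ insert (b x) T := by simp [hne, haT]
    have hle := Finset.card_le_card hTS
    rw [Finset.card_insert_of_notMem haS, Finset.card_insert_of_notMem hbS,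
      Finset.card_insert_of_notMem haT', Finset.card_insert_of_notMem hbT,
      Finset.card_insert_of_notMem haT]
    have e1 : (∀ w ∈ insert x W, a w ∈ T → b w ∈ T) ↔ ∀ w ∈ W, a w ∈ T → b w ∈ T := by
      simp [haT]
    have e2 : (∀ w ∈ insert x W, a w ∈ insert (b x) T → b w ∈ insert (b x) T) ↔
        ∀ w ∈ W, a w ∈ T → b w ∈ T := by
      rw [Finset.forall_mem_insert]
      constructor
      · intro h w hw
        simpa [n3 w hw, n2 w hw] using h.2 w hw
      · intro h
        refine ⟨by simp, fun w hw => ?_⟩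
        simpa [n3 w hw, n2 w hw] using h w hw
    have e3 : ¬ (∀ w ∈ insert x W, a w ∈ insert (a x) T → b w ∈ insert (a x) T) := by
      intro h
      have := h x hxx (by simp)
      simp [hne.symm, hbT] at this
    have e4 : (∀ w ∈ insert x W, a w ∈ insert (a x) (insert (b x) T) →
          b w ∈ insert (a x) (insert (b x) T)) ↔
        ∀ w ∈ W, a w ∈ T → b w ∈ T := by
      rw [Finset.forall_mem_insert]
      constructor
      · intro h w hw
        simpa [n1 w hw, n4 w hw, n3 w hw, n2 w hw] using h.2 w hw
      · intro h
        refine ⟨by simp, fun w hw => ?_⟩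
        simpa [n1 w hw, n4 w hw, n3 w hw, n2 w hw] using h w hw
    simp only [e1, e2, e3, e4, if_false]
    split_ifs with h
    · obtain ⟨k, hk⟩ := Nat.exists_eq_add_of_le hle
      rw [hk, show T.card + k + 1 + 1 - T.card = k + 2 by omega,
        show T.card + k + 1 + 1 - (T.card + 1) = k + 1 by omega,
        show T.card + k + 1 + 1 - (T.card + 1 + 1) = k by omega,
        show T.card + k - T.card = k by omega]
      ring
    · simp

open Classical in
lemma pair_prob_le (n : ℕ) (p : ℝ) (hp0 : 0 ≤ p) (hp1 : p ≤ 1) (u v : Fin n) (huv : u ≠ v) :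
    graphProb n p (fun G => G.neighborSet u \ {v} ⊆ G.neighborSet v \ {u})
      ≤ (1 - p * (1 - p)) ^ (n - 2) := by
  have hq : 0 ≤ 1 - p := by linarith
  set W : Finset (Fin n) := (Finset.univ.erase u).erase v with hW
  have hWc : W.card = n - 2 := by
    rw [hW, Finset.card_erase_of_mem (by simp [huv.symm]), Finset.card_erase_of_mem (by simp)]
    simp; omega
  set S : Finset (Sym2 (Fin n)) := (⊤ : SimpleGraph (Fin n)).edgeFinset with hS
  have hSc : S.card = n.choose 2 := by
    rw [hS, SimpleGraph.card_edgeFinset_top_eq_card_choose_two]; simp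
  have hWm : ∀ w ∈ W, w ≠ v ∧ w ≠ u := by
    intro w hw; simpa [hW] using hw
  have key := pairs_sum p (fun w : Fin n => s(u, w)) (fun w => s(v, w)) W S
    (fun w hw => by simp [hS, (hWm w hw).2.symm])
    (fun w hw => by simp [hS, (hWm w hw).1.symm])
    (fun w hw w' hw' h => by
      rcases Sym2.eq_iff.1 h with h | h
      · exact huv h.1
      · exact (hWm w' hw').2 h.1.symm)
    (fun w hw w' hw' h => Sym2.congr_right.1 h)
    (fun w hw w' hw' h => Sym2.congr_right.1 h)
  rw [← hWc, ← key]
  unfold graphProb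
  set F : Finset (Sym2 (Fin n)) → ℝ := fun T =>
    (if ∀ w ∈ W, s(u, w) ∈ T → s(v, w) ∈ T then
        p ^ T.card * (1 - p) ^ (S.card - T.card) else 0) with hF
  have hF0 : ∀ T, 0 ≤ F T := by
    intro T; simp only [hF]; split_ifs <;> positivity
  calc _ ≤ ∑ G : SimpleGraph (Fin n), F G.edgeFinset := by
        refine Finset.sum_le_sum fun G _ => ?_
        split_ifs with h
        · have : ∀ w ∈ W, s(u, w) ∈ G.edgeFinset → s(v, w) ∈ G.edgeFinset := by
            intro w hw hh
            rw [SimpleGraph.mem_edgeFinset, SimpleGraph.mem_edgeSet] at hh ⊢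
            exact (h (show w ∈ G.neighborSet u \ {v} from ⟨hh, (hWm w hw).1⟩)).1
          simp only [hF]
          rw [if_pos this, hSc, Nat.card_eq_fintype_card, SimpleGraph.edgeFinset_card]
        · exact hF0 _
    _ = ∑ T ∈ Finset.univ.image (fun G : SimpleGraph (Fin n) => G.edgeFinset), F T := by
        rw [Finset.sum_image]
        intro G _ H _ h
        exact SimpleGraph.edgeFinset_inj.1 h
    _ ≤ ∑ T ∈ S.powerset, F T := by
        refine Finset.sum_le_sum_of_subset_of_nonneg ?_ (fun T _ _ => hF0 T)
        intro T hT
        obtain ⟨G, -, rfl⟩ := Finset.mem_image.1 hT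
        rw [Finset.mem_powerset, hS]
        exact SimpleGraph.edgeFinset_mono le_top
    _ ≤ _ := by
        refine le_of_eq (Finset.sum_congr rfl fun T _ => ?_)
        simp only [hF]
        congr

lemma graphProb_nonneg (n : ℕ) (p : ℝ) (hp0 : 0 ≤ p) (hp1 : p ≤ 1)
    (A : SimpleGraph (Fin n) → Prop) : 0 ≤ graphProb n p A := by
  have hq : 0 ≤ 1 - p := by linarith
  unfold graphProb
  refine Finset.sum_nonneg fun G _ => ?_
  split_ifs <;> positivity

open Classical in
lemma union_le (n : ℕ) (p : ℝ) (hp0 : 0 ≤ p) (hp1 : p ≤ 1) :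
    graphProb n p (fun G =>
        ∃ u v : Fin n, u ≠ v ∧ G.neighborSet u \ {v} ⊆ G.neighborSet v \ {u})
      ≤ (n : ℝ) ^ 2 * (1 - p * (1 - p)) ^ (n - 2) := by
  have hq : 0 ≤ 1 - p := by linarith
  have hr : 0 ≤ 1 - p * (1 - p) := by nlinarith
  calc _ ≤ ∑ u : Fin n, ∑ v : Fin n, (if u ≠ v then
        graphProb n p (fun G => G.neighborSet u \ {v} ⊆ G.neighborSet v \ {u}) else 0) := by
        have : ∀ u v : Fin n, (if u ≠ v then
          graphProb n p (fun G => G.neighborSet u \ {v} ⊆ G.neighborSet v \ {u}) else 0)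
          = ∑ G : SimpleGraph (Fin n),
            if u ≠ v ∧ G.neighborSet u \ {v} ⊆ G.neighborSet v \ {u} then
            p ^ (Nat.card G.edgeSet) * (1 - p) ^ (n.choose 2 - Nat.card G.edgeSet) else 0 := by
          intro u v
          by_cases h : u = v
          · simp [h]
          · simp only [ne_eq, h, not_false_eq_true, if_true, true_and, graphProb]
        simp only [this]
        rw [Finset.sum_congr rfl (fun u _ => Finset.sum_comm), Finset.sum_comm]
        unfold graphProb
        refine Finset.sum_le_sum fun G _ => ?_
        have nn : ∀ u v : Fin n, 0 ≤
            (if u ≠ v ∧ G.neighborSet u \ {v} ⊆ G.neighborSet v \ {u} then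
            p ^ (Nat.card G.edgeSet) * (1 - p) ^ (n.choose 2 - Nat.card G.edgeSet) else 0) := by
          intro u v; split_ifs <;> positivity
        split_ifs with h
        · obtain ⟨u, v, h⟩ := h
          refine le_trans ?_ (Finset.single_le_sum
            (fun u _ => Finset.sum_nonneg fun v _ => nn u v) (Finset.mem_univ u))
          refine le_trans ?_ (Finset.single_le_sum (fun v _ => nn u v) (Finset.mem_univ v))
          rw [if_pos h]
        · exact Finset.sum_nonneg fun u _ => Finset.sum_nonneg fun v _ => nn u v
    _ ≤ ∑ u : Fin n, ∑ v : Fin n, (1 - p * (1 - p)) ^ (n - 2) := by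
        refine Finset.sum_le_sum fun u _ => Finset.sum_le_sum fun v _ => ?_
        split_ifs with h
        · exact pair_prob_le n p hp0 hp1 u v h
        · positivity
    _ = _ := by simp; ring

/-- For `0 < α < 1` and `p = n^{-α}`, a.a.s. `G(n,p)` contains no two
distinct vertices `u, v` with `N(u) \ {v} ⊆ N(v) \ {u}`. -/
theorem aas_no_nested_neighborhoods (α : ℝ) (h0 : 0 < α) (h1 : α < 1) :
    Tendsto (fun n : ℕ => graphProb n ((n : ℝ) ^ (-α)) (fun G =>
        ∃ u v : Fin n, u ≠ v ∧ G.neighborSet u \ {v} ⊆ G.neighborSet v \ {u}))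
      atTop (nhds 0) := by
  have hβ : 0 < 1 - α := by linarith
  have lim : Tendsto (fun n : ℕ => (((n : ℝ) ^ (1 - α)) ^ (2 / (1 - α))) *
      Real.exp (-(1 / 4) * ((n : ℝ) ^ (1 - α)))) atTop (nhds 0) :=
    (tendsto_rpow_mul_exp_neg_mul_atTop_nhds_zero (2 / (1 - α)) (1 / 4) (by norm_num)).comp
      ((tendsto_rpow_atTop hβ).comp tendsto_natCast_atTop_atTop)
  have hp : Tendsto (fun n : ℕ => (n : ℝ) ^ (-α)) atTop (nhds 0) :=
    (tendsto_rpow_neg_atTop h0).comp tendsto_natCast_atTop_atTop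
  have hev := hp.eventually (ge_mem_nhds (show (0 : ℝ) < 1 / 2 by norm_num))
  refine tendsto_of_tendsto_of_tendsto_of_le_of_le' tendsto_const_nhds lim ?_ ?_
  · filter_upwards [hev] with n hn
    exact graphProb_nonneg n _ (by positivity) (by linarith) _
  · filter_upwards [hev, eventually_ge_atTop 4] with n hn h4
    have hn4 : (4 : ℝ) ≤ n := by exact_mod_cast h4
    have hn0 : (0 : ℝ) < n := by linarith
    refine (union_le n _ (by positivity) (by linarith)).trans ?_
    have hpos : 0 < (n : ℝ) ^ (-α) := by positivity
    have hmul : (n : ℝ) ^ (1 - α) = n * (n : ℝ) ^ (-α) := by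
      rw [sub_eq_add_neg, Real.rpow_add hn0, Real.rpow_one]
    have hsq : ((n : ℝ) ^ (1 - α)) ^ (2 / (1 - α)) = (n : ℝ) ^ 2 := by
      rw [← Real.rpow_mul hn0.le, mul_div_cancel₀ _ hβ.ne']
      norm_num
    rw [hsq, hmul]
    set p := (n : ℝ) ^ (-α)
    refine mul_le_mul_of_nonneg_left ?_ (by positivity)
    have hb : 1 - p * (1 - p) ≤ Real.exp (-(p * (1 - p))) := by
      have := Real.add_one_le_exp (-(p * (1 - p))); linarith
    refine (pow_le_pow_left₀ (by nlinarith) hb _).trans ?_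
    rw [← Real.exp_nat_mul, Real.exp_le_exp, Nat.cast_sub (by omega)]
    push_cast
    have i1 : p / 2 ≤ p * (1 - p) := by nlinarith
    have i2 : (n : ℝ) / 2 ≤ n - 2 := by linarith
    have := mul_le_mul i2 i1 (by positivity) (by linarith)
    linarith
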